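/- Let x₁, …, x_n be strictly positive real numbers that are linearly independent over ℚ, and let w₁, …, w_n be natural numbers with 1 = ∑_i w_i·x_i. Then the map z ↦ ∑_i z_i·x_i is a bijection from the set {z ∈ ℤⁿ : 0 ≤ z_i ≤ w_i for all i} onto the set of real numbers y such that both y and 1 − y are nonnegative integer combinations of x₁, …, x_n. -/

import Mathlib

/-- Let x₁, …, x_n be strictly positive reals, linearly independent over ℚ,
and let w₁, …, w_n be naturals with 1 = ∑ w_i·x_i. Then z ↦ ∑ z_i·x_i is a bijection
from {z ∈ ℤⁿ : 0 ≤ z_i ≤ w_i for all i} onto the set of reals y such that both y and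
1 − y are nonnegative integer combinations of x₁, …, x_n. -/
theorem stmt_7 (n : ℕ) (x : Fin n → ℝ) (hx : ∀ i, 0 < x i)
    (hli : LinearIndependent ℚ x) (w : Fin n → ℕ)
    (h1 : (1 : ℝ) = ∑ i, (w i : ℝ) * x i) :
    Set.BijOn (fun z : Fin n → ℤ => ∑ i, (z i : ℝ) * x i)
      {z : Fin n → ℤ | ∀ i, 0 ≤ z i ∧ z i ≤ (w i : ℤ)}
      {y : ℝ | (∃ c : Fin n → ℕ, y = ∑ i, (c i : ℝ) * x i) ∧
               (∃ c : Fin n → ℕ, 1 - y = ∑ i, (c i : ℝ) * x i)} := by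
  have key : ∀ a b : Fin n → ℤ, ∑ i, (a i : ℝ) * x i = ∑ i, (b i : ℝ) * x i → a = b := by
    intro a b hab
    have h0 : ∑ i, ((a i - b i : ℤ) : ℚ) • x i = 0 := by
      have h2 : ∑ i, ((a i - b i : ℤ) : ℚ) • x i
          = ∑ i, (a i : ℝ) * x i - ∑ i, (b i : ℝ) * x i := by
        rw [← Finset.sum_sub_distrib]
        refine Finset.sum_congr rfl fun i _ => ?_
        rw [Rat.smul_def]
        push_cast
        ring
      rw [h2, hab, sub_self]
    have h3 := Fintype.linearIndependent_iff.mp hli _ h0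
    funext i
    have h4 : a i - b i = 0 := by exact_mod_cast h3 i
    omega
  refine ⟨?_, ?_, ?_⟩
  · intro z hz
    simp only [Set.mem_setOf_eq] at hz ⊢
    refine ⟨⟨fun i => (z i).toNat, ?_⟩, ⟨fun i => ((w i : ℤ) - z i).toNat, ?_⟩⟩
    · refine Finset.sum_congr rfl fun i _ => ?_
      have h : (((z i).toNat : ℤ) : ℝ) = (z i : ℝ) := by rw [Int.toNat_of_nonneg (hz i).1]
      rw [← h, Int.cast_natCast]
    · rw [h1, ← Finset.sum_sub_distrib]
      refine Finset.sum_congr rfl fun i _ => ?_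
      have h : (((((w i : ℤ) - z i).toNat : ℕ) : ℤ) : ℝ) = (((w i : ℤ) - z i : ℤ) : ℝ) := by
        rw [Int.toNat_of_nonneg (by linarith [(hz i).2])]
      rw [Int.cast_natCast] at h
      rw [h]
      push_cast
      ring
  · intro a _ b _ hab
    exact key a b hab
  · rintro y ⟨⟨c, hc⟩, ⟨d, hd⟩⟩
    refine ⟨fun i => (c i : ℤ), ?_, ?_⟩
    · have h : (fun i => (c i : ℤ) + (d i : ℤ)) = fun i => (w i : ℤ) := by
        apply key
        push_cast
        simp only [add_mul, Finset.sum_add_distrib]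
        rw [← hc, ← hd, ← h1]
        ring
      intro i
      have h5 := congrFun h i
      simp only at h5 ⊢
      omega
    · simp [hc]
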